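/- Let λ : ℂ → ℂ be an entire function of order 1 with λ(-s) = λ(s) or λ(-s) = -λ(s), λ(σ) > 0 for all real σ > 1/2, and such that λ admits a Hadamard product λ(s) = s^m e^A ∏_k (1 - s²/ρ_k²) over its nonzero zeros ±ρ_k. If every zero β+iγ of λ with β > 0 satisfies |γ| > β, then every derivative λ^(k)(0) ≥ 0 and every derivative λ^(k)(σ) > 0 for all real σ > 1/2 and k ≥ 0. -/

import Mathlib

/-!
Write `Λ s = s ^ m * exp A * F (s ^ 2)` with `F w = ∏' k, (1 + a k * w)` and `a k = -1 / ρ k ^ 2`.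
The zero-free sector says exactly that `0 ≤ re (a k)`, so the partial products of `F` have no roots
in the open right half-plane. By Gauss–Lucas neither do their derivatives, and the partial fraction
expansion of `p' / p` gives `0 ≤ re (conj (p z) * p' z)` for `0 ≤ re z`, for each such polynomial
`p`. Unlike the location of the roots, this inequality is closed, so it passes to `F` and all its
derivatives. Since `F` is real and does not vanish on `[0, ∞)` and `F 0 = 1`, it is positive there;
by induction on `n`, the inequality propagates the nonnegativity of `F⁽ⁿ⁾` on `[0, ∞)` to `F⁽ⁿ⁺¹⁾`.
Hence the Taylor coefficients of `F`, and so those of `Λ`, are nonnegative. A derivative of `Λ`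
vanishing at some `σ > 0` would then vanish identically, making `Λ` a polynomial, which is
impossible as `Λ` has infinitely many zeros.

A `tprod` that does not converge has the junk value `1`. Since `Λ` is neither `0` nor
`s ^ m * exp A`, at some point the product converges to a nonzero value, which already forces
`∑ ‖a k‖ < ∞` by passing to logarithms.
-/

open Filter Topology Polynomial
open scoped ComplexOrder ComplexConjugate

/-! ### Nonnegative Taylor coefficients -/

/-- All derivatives of `f` at `z`, including the zeroth, are nonnegative reals. For entire `f` and
`z = 0` this says that the Taylor coefficients are nonnegative. -/
def HasNonnegDerivsAt (f : ℂ → ℂ) (z : ℂ) : Prop :=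
  ∀ n : ℕ, 0 ≤ iteratedDeriv n f z

lemma iteratedDeriv_iteratedDeriv {𝕜 E : Type*} [NontriviallyNormedField 𝕜]
    [NormedAddCommGroup E] [NormedSpace 𝕜 E] (f : 𝕜 → E) (m n : ℕ) :
    iteratedDeriv m (iteratedDeriv n f) = iteratedDeriv (m + n) f := by
  simp only [iteratedDeriv_eq_iterate, Function.iterate_add_apply]

namespace HasNonnegDerivsAt

variable {f g : ℂ → ℂ} {z : ℂ}

lemma const {c : ℂ} (hc : 0 ≤ c) : HasNonnegDerivsAt (fun _ => c) z := by
  intro n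
  rw [iteratedDeriv_const]
  split_ifs <;> simp [hc]

lemma id_pow (hz : 0 ≤ z) (m : ℕ) : HasNonnegDerivsAt (fun s => s ^ m) z := by
  intro n
  rw [iteratedDeriv_pow]
  exact mul_nonneg (Nat.cast_nonneg _) (pow_nonneg hz _)

lemma mul (hf : HasNonnegDerivsAt f z) (hg : HasNonnegDerivsAt g z)
    (hfd : AnalyticAt ℂ f z) (hgd : AnalyticAt ℂ g z) :
    HasNonnegDerivsAt (fun s => f s * g s) z := by
  intro n
  rw [iteratedDeriv_fun_mul hfd.contDiffAt hgd.contDiffAt]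
  exact Finset.sum_nonneg fun i _ => mul_nonneg (mul_nonneg (Nat.cast_nonneg _) (hf i)) (hg _)

lemma comp (hf : HasNonnegDerivsAt f (g z)) (hg : HasNonnegDerivsAt g z)
    (hfd : AnalyticAt ℂ f (g z)) (hgd : AnalyticAt ℂ g z) : HasNonnegDerivsAt (f ∘ g) z := by
  intro n
  rw [iteratedDeriv_comp_eq_sum_orderedFinpartition hfd.contDiffAt hgd.contDiffAt le_rfl]
  exact Finset.sum_nonneg fun c _ =>
    mul_nonneg (hf _) (Finset.prod_nonneg fun j _ => hg _)

protected lemma iteratedDeriv (hf : HasNonnegDerivsAt f z) (k : ℕ) :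
    HasNonnegDerivsAt (iteratedDeriv k f) z := by
  intro n
  rw [iteratedDeriv_iteratedDeriv]
  exact hf (n + k)

lemma pos_of_ne_zero (hf : HasNonnegDerivsAt f 0) (hfd : Differentiable ℂ f) (hne : f ≠ 0)
    {x : ℂ} (hx : 0 < x) : 0 < f x := by
  have taylor := Complex.hasSum_taylorSeries_of_entire hfd 0
  have term_nonneg (n : ℕ) :
      0 ≤ (n.factorial : ℂ)⁻¹ • (x - 0) ^ n • iteratedDeriv n f 0 := by
    rw [sub_zero]
    exact mul_nonneg (inv_nonneg.2 (Nat.cast_nonneg _)) (mul_nonneg (pow_nonneg hx.le _) (hf n))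
  refine lt_of_le_of_ne ((taylor x).nonneg term_nonneg) fun hzero => hne ?_
  have sum_zero := taylor x
  rw [← hzero] at sum_zero
  have term_zero := (hasSum_zero_iff_of_nonneg term_nonneg).1 sum_zero
  have deriv_zero (n : ℕ) : iteratedDeriv n f 0 = 0 := by
    simpa [Nat.factorial_ne_zero, hx.ne'] using congrFun term_zero n
  funext z
  simpa only [deriv_zero, smul_zero] using (taylor z).unique (by simp [deriv_zero, hasSum_zero])

end HasNonnegDerivsAt

lemma exists_polynomial_of_iteratedDeriv_eq_zero {f : ℂ → ℂ} (hf : Differentiable ℂ f) {k : ℕ}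
    (hk : iteratedDeriv k f = 0) : ∃ p : ℂ[X], ∀ z, p.eval z = f z := by
  have deriv_zero (n : ℕ) (hn : k ≤ n) : iteratedDeriv n f = 0 := by
    rw [← Nat.sub_add_cancel hn, ← iteratedDeriv_iteratedDeriv, hk]
    exact funext fun z => iteratedDeriv_const_zero
  refine ⟨∑ n ∈ Finset.range k, C ((n.factorial : ℂ)⁻¹ * iteratedDeriv n f 0) * X ^ n,
    fun z => ?_⟩
  rw [← Complex.taylorSeries_eq_of_entire' 0 z hf, eval_finsetSum,
    tsum_eq_sum (s := Finset.range k) fun n hn => by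
      simp [deriv_zero n (by simpa using hn)]]
  simp only [eval_mul, eval_C, eval_pow, eval_X, sub_zero]

lemma iteratedDeriv_ne_zero_of_infinite_zeros {f : ℂ → ℂ} (hf : Differentiable ℂ f) (hne : f ≠ 0)
    (hinf : {z | f z = 0}.Infinite) (k : ℕ) : iteratedDeriv k f ≠ 0 := by
  intro hk
  obtain ⟨p, hp⟩ := exists_polynomial_of_iteratedDeriv_eq_zero hf hk
  have p_zero : p = 0 :=
    eq_zero_of_infinite_isRoot p (hinf.mono fun z hz => (hp z).trans hz)
  exact hne (funext fun z => by rw [← hp, p_zero, eval_zero, Pi.zero_apply])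

/-! ### Weakly Hurwitz polynomials and their limits -/

/-- The polynomial has no root in the open right half-plane (a weak form of Hurwitz stability).
The condition is stated on the multiset of roots, so that it holds for the zero polynomial and is
therefore inherited by derivatives of constants. -/
def WeaklyHurwitz (p : ℂ[X]) : Prop :=
  ∀ r ∈ p.roots, r.re ≤ 0

namespace WeaklyHurwitz

protected lemma derivative {p : ℂ[X]} (hp : WeaklyHurwitz p) : WeaklyHurwitz (derivative p) := by
  rcases le_or_gt p.degree 0 with hdeg | hdeg
  · rw [eq_C_of_degree_le_zero hdeg]
    simp [WeaklyHurwitz]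
  · have hull_subset : convexHull ℝ (p.rootSet ℂ) ⊆ {z : ℂ | z.re ≤ 0} :=
      convexHull_min (fun r hr => hp r (by simpa [mem_rootSet] using hr)) (convex_halfSpace_re_le 0)
    intro r hr
    exact hull_subset (rootSet_derivative_subset_convexHull_rootSet hdeg
      (by simpa [mem_rootSet] using hr))

lemma iterate_derivative {p : ℂ[X]} (hp : WeaklyHurwitz p) (n : ℕ) :
    WeaklyHurwitz (derivative^[n] p) := by
  induction n with
  | zero => exact hp
  | succ n ih => rw [Function.iterate_succ_apply']; exact ih.derivative

lemma re_conj_eval_mul_eval_derivative_nonneg {p : ℂ[X]} (hp : WeaklyHurwitz p) {z : ℂ}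
    (hz : 0 ≤ z.re) : 0 ≤ (conj (p.eval z) * (derivative p).eval z).re := by
  by_cases hpz : p.eval z = 0
  · simp [hpz]
  have logDeriv_nonneg : 0 ≤ ((derivative p).eval z / p.eval z).re := by
    rw [(IsAlgClosed.splits p).eval_derivative_div_eval_of_ne_zero hpz,
      ← Complex.coe_reAddGroupHom, map_multiset_sum, Multiset.map_map]
    refine Multiset.sum_nonneg fun y hy => ?_
    obtain ⟨r, hr, rfl⟩ := Multiset.mem_map.1 hy
    have hzr : 0 ≤ (z - r).re := by simpa using (hp r hr).trans hz
    simpa [Complex.inv_re] using div_nonneg hzr (Complex.normSq_nonneg (z - r))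
  have factor : conj (p.eval z) * (derivative p).eval z =
      (Complex.normSq (p.eval z) : ℂ) * ((derivative p).eval z / p.eval z) := by
    rw [Complex.normSq_eq_conj_mul_self]
    field_simp
  rw [factor, Complex.re_ofReal_mul]
  exact mul_nonneg (Complex.normSq_nonneg _) logDeriv_nonneg

lemma prod_one_add_C_mul_X {ι : Type*} {a : ι → ℂ} (ha : ∀ k, 0 ≤ (a k).re) (S : Finset ι) :
    WeaklyHurwitz (∏ k ∈ S, (1 + C (a k) * X)) := by
  intro r hr
  have hprod : ∏ k ∈ S, (1 + a k * r) = 0 := by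
    simpa [IsRoot, eval_prod] using isRoot_of_mem_roots hr
  obtain ⟨k, -, hk⟩ := Finset.prod_eq_zero_iff.1 hprod
  have ha_eq : a k = -r⁻¹ := by
    have hr0 : r ≠ 0 := by rintro rfl; simp at hk
    field_simp
    linear_combination hk
  by_contra! hpos
  have hnorm : 0 < Complex.normSq r := Complex.normSq_pos.2 fun h => by simp [h] at hpos
  have := ha k
  rw [ha_eq, Complex.neg_re, Complex.inv_re] at this
  linarith [div_pos hpos hnorm]

end WeaklyHurwitz

lemma iteratedDeriv_polynomial_eval {𝕜 : Type*} [NontriviallyNormedField 𝕜] (p : 𝕜[X]) (n : ℕ) :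
    iteratedDeriv n (fun z => p.eval z) = fun z => (derivative^[n] p).eval z := by
  induction n with
  | zero => simp
  | succ n ih =>
    rw [iteratedDeriv_succ, ih, Function.iterate_succ_apply']
    funext z
    exact Polynomial.deriv _

lemma tendstoLocallyUniformlyOn_iteratedDeriv {ι E : Type*} [NormedAddCommGroup E]
    [NormedSpace ℂ E] [CompleteSpace E] {φ : Filter ι} {F : ι → ℂ → E} {f : ℂ → E} {U : Set ℂ}
    (h : TendstoLocallyUniformlyOn F f φ U)
    (hF : ∀ i, DifferentiableOn ℂ (F i) U) (hU : IsOpen U) (n : ℕ) :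
    TendstoLocallyUniformlyOn (fun i => iteratedDeriv n (F i)) (iteratedDeriv n f) φ U := by
  induction n with
  | zero => simpa only [iteratedDeriv_zero] using h
  | succ n ih =>
    simp only [iteratedDeriv_succ]
    refine ih.deriv (Eventually.of_forall fun i => ?_) hU
    rw [iteratedDeriv_eq_iterate]
    exact (((hF i).analyticOnNhd hU).iterated_deriv n).differentiableOn

lemma re_conj_iteratedDeriv_mul_nonneg {ι : Type*} {φ : Filter ι} [φ.NeBot] {p : ι → ℂ[X]}
    {f : ℂ → ℂ} (hp : ∀ i, WeaklyHurwitz (p i))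
    (hf : TendstoLocallyUniformlyOn (fun i z => (p i).eval z) f φ Set.univ) (n : ℕ) {z : ℂ}
    (hz : 0 ≤ z.re) : 0 ≤ (conj (iteratedDeriv n f z) * iteratedDeriv (n + 1) f z).re := by
  have tendsto_iteratedDeriv (k : ℕ) :
      Tendsto (fun i => (derivative^[k] (p i)).eval z) φ (𝓝 (iteratedDeriv k f z)) := by
    simpa only [iteratedDeriv_polynomial_eval] using
      (tendstoLocallyUniformlyOn_iteratedDeriv hf (fun i => (p i).differentiable.differentiableOn)
        isOpen_univ k).tendsto_at (Set.mem_univ z)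
  refine ge_of_tendsto' ((Complex.continuous_re.tendsto _).comp
    (((Complex.continuous_conj.tendsto _).comp (tendsto_iteratedDeriv n)).mul
      (tendsto_iteratedDeriv (n + 1)))) fun i => ?_
  simpa only [Function.comp_apply, Function.iterate_succ_apply'] using
    ((hp i).iterate_derivative n).re_conj_eval_mul_eval_derivative_nonneg hz

lemma deriv_nonneg_of_re_conj_mul_nonneg {g : ℂ → ℂ} {x : ℝ} (hg : DifferentiableAt ℂ g x)
    (hnonneg : ∀ y : ℝ, x ≤ y → 0 ≤ g y) (hre : 0 ≤ (conj (g x) * deriv g x).re) :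
    0 ≤ deriv g x := by
  have tendsto_slope : Tendsto (slope (fun y : ℝ => g y) x) (𝓝[>] x) (𝓝 (deriv g x)) :=
    (hasDerivAt_iff_tendsto_slope.1 hg.hasDerivAt.comp_ofReal).mono_left
      (nhdsWithin_mono _ fun y (hy : x < y) => hy.ne')
  have hx := Complex.nonneg_iff.1 (hnonneg x le_rfl)
  rcases hx.1.eq_or_lt with hre_zero | hre_pos
  · have gx_zero : g x = 0 := Complex.ext hre_zero.symm hx.2.symm
    refine ge_of_tendsto tendsto_slope ?_
    filter_upwards [self_mem_nhdsWithin] with y hy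
    rw [slope_def_module, gx_zero, sub_zero]
    exact smul_nonneg (inv_nonneg.2 (sub_pos.2 hy).le) (hnonneg y (le_of_lt hy))
  · have im_zero : (deriv g x).im = 0 := by
      refine tendsto_nhds_unique ((Complex.continuous_im.tendsto _).comp tendsto_slope)
        (tendsto_const_nhds.congr' ?_)
      filter_upwards [self_mem_nhdsWithin] with y hy
      have hy := Complex.nonneg_iff.1 (hnonneg y (le_of_lt hy))
      simp [slope_def_module, ← hx.2, ← hy.2]
    refine Complex.nonneg_iff.2 ⟨?_, im_zero.symm⟩
    simp only [Complex.mul_re, Complex.conj_re, im_zero, mul_zero, sub_zero] at hre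
    exact nonneg_of_mul_nonneg_right hre hre_pos

lemma iteratedDeriv_nonneg_of_re_conj_mul_nonneg {f : ℂ → ℂ} (hf : Differentiable ℂ f)
    (hnonneg : ∀ x : ℝ, 0 ≤ x → 0 ≤ f x)
    (hre : ∀ n (x : ℝ), 0 ≤ x → 0 ≤ (conj (iteratedDeriv n f x) * iteratedDeriv (n + 1) f x).re)
    (n : ℕ) : ∀ x : ℝ, 0 ≤ x → 0 ≤ iteratedDeriv n f x := by
  induction n with
  | zero => simpa only [iteratedDeriv_zero] using hnonneg
  | succ n ih =>
    intro x hx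
    have hre := hre n x hx
    rw [iteratedDeriv_succ] at hre ⊢
    exact deriv_nonneg_of_re_conj_mul_nonneg
      ((hf.contDiff.differentiable_iteratedDeriv n (WithTop.coe_lt_top _)) x)
      (fun y hy => ih y (hx.trans hy)) hre

/-! ### Products of genus zero -/

lemma log_prod_eq_sum_log {ι : Type*} {f : ι → ℂ} {t : Finset ι}
    (h : ∀ u ⊆ t, 0 < (∏ k ∈ u, f k).re) :
    Complex.log (∏ k ∈ t, f k) = ∑ k ∈ t, Complex.log (f k) := by
  classical
  have ne_zero {z : ℂ} (hz : 0 < z.re) : z ≠ 0 := by rintro rfl; simp at hz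
  have abs_arg_lt {z : ℂ} (hz : 0 < z.re) : |z.arg| < Real.pi / 2 :=
    Complex.abs_arg_lt_pi_div_two_iff.2 (Or.inl hz)
  induction t using Finset.induction_on with
  | empty => simp
  | insert k t hk ih =>
    have re_head : 0 < (f k).re := by simpa using h {k} (by simp)
    have re_tail : 0 < (∏ j ∈ t, f j).re := h t (Finset.subset_insert _ _)
    have arg_head := abs_lt.1 (abs_arg_lt re_head)
    have arg_tail := abs_lt.1 (abs_arg_lt re_tail)
    rw [Finset.prod_insert hk, Finset.sum_insert hk,
      Complex.log_mul (ne_zero re_head) (ne_zero re_tail)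
        ⟨by linarith only [arg_head.1, arg_tail.1], by linarith only [arg_head.2, arg_tail.2]⟩,
      ih fun u hu => h u (hu.trans (Finset.subset_insert _ _))]

lemma exists_forall_disjoint_norm_prod_sub_one_lt {ι 𝕜 : Type*} [NormedField 𝕜] {f : ι → 𝕜}
    (hf : Multipliable f) (hne : ∏' k, f k ≠ 0) {ε : ℝ} (hε : 0 < ε) :
    ∃ s : Finset ι, ∀ t : Finset ι, Disjoint t s → ‖∏ k ∈ t, f k - 1‖ < ε := by
  have factor_ne_zero (k : ι) : f k ≠ 0 := fun hk => hne (tprod_of_exists_eq_zero ⟨k, hk⟩)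
  have multipliable_units : Multipliable fun k => Units.mk0 (f k) (factor_ne_zero k) :=
    ⟨Units.mk0 _ hne, (Units.isEmbedding_val₀.isInducing.hasProd_iff (g := Units.coeHom 𝕜) _ _).1
      hf.hasProd⟩
  have nhds_one : {u : 𝕜ˣ | ‖(u : 𝕜) - 1‖ < ε} ∈ 𝓝 1 := by
    refine (isOpen_lt (by fun_prop) continuous_const).mem_nhds ?_
    simpa using hε
  obtain ⟨s, hs⟩ := multipliable_units.vanishing nhds_one
  exact ⟨s, fun t ht => by simpa using hs t ht⟩

lemma summable_log_of_multipliable {ι : Type*} {f : ι → ℂ} (hf : Multipliable f)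
    (hne : ∏' k, f k ≠ 0) : Summable fun k => Complex.log (f k) := by
  rw [summable_iff_vanishing_norm]
  intro ε hε
  obtain ⟨s, hs⟩ := exists_forall_disjoint_norm_prod_sub_one_lt hf hne
    (show 0 < min (1 / 2) (ε / 2) by positivity)
  refine ⟨s, fun t ht => ?_⟩
  have near_one (u : Finset ι) (hu : u ⊆ t) : ‖∏ k ∈ u, f k - 1‖ < min (1 / 2) (ε / 2) :=
    hs u (Finset.disjoint_of_subset_left hu ht)
  have re_pos (u : Finset ι) (hu : u ⊆ t) : 0 < (∏ k ∈ u, f k).re := by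
    have re_ge := neg_le_of_abs_le (Complex.abs_re_le_norm (∏ k ∈ u, f k - 1))
    have norm_lt := (near_one u hu).trans_le (min_le_left _ _)
    rw [Complex.sub_re, Complex.one_re] at re_ge
    linarith
  have near_one_t := lt_min_iff.1 (near_one t subset_rfl)
  have norm_log_le := Complex.norm_log_one_add_half_le_self near_one_t.1.le
  rw [add_sub_cancel] at norm_log_le
  rw [← log_prod_eq_sum_log re_pos]
  linarith

lemma summable_norm_sub_one_of_multipliable {ι : Type*} {f : ι → ℂ} (hf : Multipliable f)
    (hne : ∏' k, f k ≠ 0) : Summable fun k => ‖f k - 1‖ := by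
  have summable_log := (summable_log_of_multipliable hf hne).norm
  refine Summable.of_norm_bounded_eventually (summable_log.mul_left 2) ?_
  filter_upwards [summable_log.tendsto_cofinite_zero.eventually_le_const one_pos] with k hk
  have factor_ne_zero : f k ≠ 0 := fun hk => hne (tprod_of_exists_eq_zero ⟨k, hk⟩)
  simpa [Complex.exp_log factor_ne_zero] using Complex.norm_exp_sub_one_le hk

/-- The canonical product of genus zero whose zeros are the points `-1 / a k` with `a k ≠ 0`.
Where the product does not converge, its value is that of `tprod`, namely `1`. -/
noncomputable def genusZeroProduct {ι : Type*} (a : ι → ℂ) (w : ℂ) : ℂ :=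
  ∏' k, (1 + a k * w)

section genusZeroProduct

variable {ι : Type*} {a : ι → ℂ}

lemma genusZeroProduct_zero : genusZeroProduct a 0 = 1 := by
  simp [genusZeroProduct]

lemma summable_norm_of_genusZeroProduct_ne {w : ℂ} (hne_zero : genusZeroProduct a w ≠ 0)
    (hne_one : genusZeroProduct a w ≠ 1) : Summable fun k => ‖a k‖ := by
  have multipliable : Multipliable fun k => 1 + a k * w := by
    by_contra h
    exact hne_one (tprod_eq_one_of_not_multipliable h)
  have hw : w ≠ 0 := by
    rintro rfl
    exact hne_one genusZeroProduct_zero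
  have := summable_norm_sub_one_of_multipliable multipliable hne_zero
  simp only [add_sub_cancel_left, norm_mul] at this
  exact (summable_mul_right_iff (norm_ne_zero_iff.2 hw)).1 this

lemma tendstoLocallyUniformlyOn_genusZeroProduct (ha : Summable fun k => ‖a k‖) :
    TendstoLocallyUniformlyOn (fun (S : Finset ι) w => ∏ k ∈ S, (1 + a k * w))
      (genusZeroProduct a) atTop Set.univ := by
  refine hasProdLocallyUniformlyOn_iff_tendstoLocallyUniformlyOn.1
    (hasProdLocallyUniformlyOn_of_forall_compact isOpen_univ fun K _ hK => ?_)
  obtain ⟨M, hM⟩ := hK.exists_bound_of_continuousOn continuousOn_id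
  refine Summable.hasProdUniformlyOn_one_add hK (ha.mul_right M)
    (Eventually.of_forall fun k w hw => ?_) fun k => by fun_prop
  rw [norm_mul]
  gcongr
  exact hM w hw

lemma differentiable_genusZeroProduct (ha : Summable fun k => ‖a k‖) :
    Differentiable ℂ (genusZeroProduct a) :=
  differentiableOn_univ.1 <| (tendstoLocallyUniformlyOn_genusZeroProduct ha).differentiableOn
    (Eventually.of_forall fun S => by fun_prop) isOpen_univ

lemma genusZeroProduct_ne_zero (ha : Summable fun k => ‖a k‖) (hre : ∀ k, 0 ≤ (a k).re) {x : ℝ}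
    (hx : 0 ≤ x) : genusZeroProduct a x ≠ 0 := by
  refine tprod_one_add_ne_zero_of_summable (fun k hk => ?_) ?_
  · have := congrArg Complex.re hk
    simp only [Complex.add_re, Complex.one_re, Complex.re_mul_ofReal, Complex.zero_re] at this
    linarith [mul_nonneg (hre k) hx]
  · simpa only [norm_mul] using ha.mul_right ‖(x : ℂ)‖

lemma genusZeroProduct_pos (ha : Summable fun k => ‖a k‖) (hre : ∀ k, 0 ≤ (a k).re)
    (hreal : ∀ x : ℝ, 0 < x → (genusZeroProduct a x).im = 0) {x : ℝ} (hx : 0 ≤ x) :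
    0 < genusZeroProduct a x := by
  have im_zero (y : ℝ) (hy : 0 ≤ y) : (genusZeroProduct a y).im = 0 := by
    rcases hy.eq_or_lt with rfl | hy
    · simp [genusZeroProduct_zero]
    · exact hreal y hy
  refine Complex.pos_iff.2 ⟨?_, (im_zero x hx).symm⟩
  by_contra! hneg
  have continuous_re : Continuous fun y : ℝ => (genusZeroProduct a y).re :=
    Complex.continuous_re.comp
      ((differentiable_genusZeroProduct ha).continuous.comp Complex.continuous_ofReal)
  obtain ⟨y, hy, hy_zero⟩ := intermediate_value_Icc' hx continuous_re.continuousOn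
    ⟨hneg, by simp [genusZeroProduct_zero]⟩
  exact genusZeroProduct_ne_zero ha hre hy.1 (Complex.ext hy_zero (im_zero y hy.1))

lemma hasNonnegDerivsAt_genusZeroProduct (ha : Summable fun k => ‖a k‖)
    (hre : ∀ k, 0 ≤ (a k).re) (hreal : ∀ x : ℝ, 0 < x → (genusZeroProduct a x).im = 0) :
    HasNonnegDerivsAt (genusZeroProduct a) 0 := by
  intro n
  have polynomial_limit := tendstoLocallyUniformlyOn_genusZeroProduct ha
  have eval_partial_product (S : Finset ι) (w : ℂ) :
      ∏ k ∈ S, (1 + a k * w) = (∏ k ∈ S, (1 + C (a k) * X)).eval w := by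
    simp [eval_prod]
  simp only [eval_partial_product] at polynomial_limit
  simpa using iteratedDeriv_nonneg_of_re_conj_mul_nonneg (differentiable_genusZeroProduct ha)
    (fun x hx => (genusZeroProduct_pos ha hre hreal hx).le)
    (fun n x hx => re_conj_iteratedDeriv_mul_nonneg
      (WeaklyHurwitz.prod_one_add_C_mul_X hre) polynomial_limit n (by simpa using hx)) n 0 le_rfl

lemma summable_norm_of_eq_mul_genusZeroProduct {f g q : ℂ → ℂ} (hf : Differentiable ℂ f)
    (hg : Differentiable ℂ g) (hfg : ∀ s, f s = g s * genusZeroProduct a (q s)) (hf_ne : f ≠ 0)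
    (hfg_ne : f ≠ g) : Summable fun k => ‖a k‖ := by
  obtain ⟨s, hs⟩ : ∃ s, f s * (f s - g s) ≠ 0 := by
    by_contra! h
    rcases AnalyticOnNhd.eq_zero_or_eq_zero_of_mul_eq_zero
      (fun s _ => hf.analyticAt s) (fun s _ => (hf.sub hg).analyticAt s) (U := Set.univ)
      (fun s _ => h s) isPreconnected_univ with h | h
    · exact hf_ne (funext fun s => h s trivial)
    · exact hfg_ne (funext fun s => sub_eq_zero.1 (h s trivial))
  refine summable_norm_of_genusZeroProduct_ne (w := q s) (fun h => hs ?_) fun h => hs ?_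
  · simp [hfg, h]
  · simp [hfg, h]

end genusZeroProduct

/-! ### Hadamard products in `s ^ 2` -/

lemma im_eq_zero_of_forall_gt {f : ℂ → ℂ} (hf : Differentiable ℂ f) {c : ℝ}
    (hreal : ∀ x : ℝ, c < x → (f x).im = 0) (x : ℝ) : (f x).im = 0 := by
  have analytic : AnalyticOnNhd ℝ (fun x : ℝ => (f x).im) Set.univ :=
    fun x _ => (hf.analyticAt x).im_ofReal
  have eventually_zero : (fun x : ℝ => (f x).im) =ᶠ[𝓝 (c + 1)] 0 := by
    filter_upwards [lt_mem_nhds (lt_add_one c)] using hreal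
  exact congrFun (analytic.eq_of_eventuallyEq (fun _ _ => analyticAt_const) eventually_zero) x

lemma infinite_range_of_tendsto_ne {X ι : Type*} [TopologicalSpace X] [T1Space X]
    {φ : Filter ι} [φ.NeBot] {u : ι → X} {x : X} (hu : Tendsto u φ (𝓝 x)) (hne : ∀ i, u i ≠ x) :
    (Set.range u).Infinite := fun hfin => by
  obtain ⟨i, hi⟩ := hfin.isClosed.mem_of_tendsto hu (Eventually.of_forall Set.mem_range_self)
  exact hne i hi

lemma re_neg_inv_sq_nonneg {z : ℂ} (hz : |z.re| ≤ |z.im|) : 0 ≤ (-(z ^ 2)⁻¹).re := by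
  have re_sq : (z ^ 2).re = z.re ^ 2 - z.im ^ 2 := by rw [sq, Complex.mul_re]; ring
  rw [Complex.neg_re, Complex.inv_re, re_sq, ← neg_div, neg_sub]
  exact div_nonneg (sub_nonneg.2 (sq_le_sq.2 hz)) (Complex.normSq_nonneg _)

lemma abs_re_le_abs_im_of_zero {f : ℂ → ℂ}
    (hsector : ∀ s : ℂ, f s = 0 → 0 < s.re → s.re ≤ |s.im|) {z : ℂ} (hz : f z = 0)
    (hz_neg : f (-z) = 0) : |z.re| ≤ |z.im| := by
  rcases lt_trichotomy z.re 0 with h | h | h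
  · simpa [abs_of_neg h] using hsector (-z) hz_neg (by simpa using h)
  · simp [h]
  · simpa [abs_of_pos h] using hsector z hz h

lemma infinite_range_of_summable_inv_sq {ι : Type*} [Infinite ι] {ρ : ι → ℂ} (hρ : ∀ k, ρ k ≠ 0)
    (hsum : Summable fun k => ‖-(ρ k ^ 2)⁻¹‖) : (Set.range ρ).Infinite := by
  refine Set.Infinite.of_image (fun s => -(s ^ 2)⁻¹) ?_
  rw [← Set.range_comp]
  exact infinite_range_of_tendsto_ne hsum.of_norm.tendsto_cofinite_zero fun k => by simp [hρ k]

section HadamardProduct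

variable {ι : Type*} {a : ι → ℂ} {f : ℂ → ℂ} {m : ℕ} {A : ℝ}

lemma im_genusZeroProduct_eq_zero (hreal : ∀ x : ℝ, (f x).im = 0)
    (hf : ∀ s, f s = s ^ m * Complex.exp A * genusZeroProduct a (s ^ 2)) {x : ℝ} (hx : 0 < x) :
    (genusZeroProduct a x).im = 0 := by
  have factor : f √x = ((√x ^ m * Real.exp A : ℝ) : ℂ) * genusZeroProduct a x := by
    rw [hf, ← Complex.ofReal_pow √x 2, Real.sq_sqrt hx.le]
    push_cast
    rfl
  have him := hreal √x
  rw [factor, Complex.im_ofReal_mul] at him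
  exact (mul_eq_zero.1 him).resolve_left (by positivity)

lemma hasNonnegDerivsAt_of_eq_genusZeroProduct (ha : Summable fun k => ‖a k‖)
    (hre : ∀ k, 0 ≤ (a k).re) (hreal : ∀ x : ℝ, (f x).im = 0)
    (hf : ∀ s, f s = s ^ m * Complex.exp A * genusZeroProduct a (s ^ 2)) :
    HasNonnegDerivsAt f 0 := by
  have product_analytic := (differentiable_genusZeroProduct ha).analyticAt
  have product_nonneg : HasNonnegDerivsAt (genusZeroProduct a) ((0 : ℂ) ^ 2) := by
    rw [zero_pow two_ne_zero]
    exact hasNonnegDerivsAt_genusZeroProduct ha hre fun x => im_genusZeroProduct_eq_zero hreal hf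
  have exp_nonneg : (0 : ℂ) ≤ Complex.exp A := by
    rw [← Complex.ofReal_exp]
    exact Complex.zero_le_real.2 (Real.exp_nonneg A)
  have monomial_nonneg : HasNonnegDerivsAt (fun s => s ^ m * Complex.exp A) 0 :=
    (HasNonnegDerivsAt.id_pow le_rfl m).mul (HasNonnegDerivsAt.const exp_nonneg) (by fun_prop)
      analyticAt_const
  rw [funext hf]
  exact monomial_nonneg.mul
    (product_nonneg.comp (HasNonnegDerivsAt.id_pow le_rfl 2) (product_analytic _) (by fun_prop))
    (by fun_prop) ((product_analytic _).comp (by fun_prop))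

end HadamardProduct

theorem superpositivity_from_zero_free_region_general {ι : Type*} [Infinite ι]
    (Λ : ℂ → ℂ) (m : ℕ) (A : ℝ) (ρ : ι → ℂ) (c : ℝ)
    (hent : Differentiable ℂ Λ)
    (hreal : ∀ σ : ℝ, c < σ → (Λ σ).im = 0)
    (hρ : ∀ k, ρ k ≠ 0)
    (hprod : ∀ s : ℂ, Λ s = s ^ m * Complex.exp (A : ℂ) * ∏' k, (1 - s ^ 2 / (ρ k) ^ 2))
    (hzero : ∀ s : ℂ, Λ s = 0 → 0 < s.re → s.re ≤ |s.im|) :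
    (∀ k : ℕ, 0 ≤ iteratedDeriv k Λ 0) ∧
    (∀ k : ℕ, ∀ σ : ℝ, 0 < σ → 0 < iteratedDeriv k Λ σ) := by
  have Λ_root {s : ℂ} {k : ι} (hs : s ^ 2 = ρ k ^ 2) : Λ s = 0 := by
    rw [hprod, tprod_of_exists_eq_zero ⟨k, by simp [hs, hρ k]⟩, mul_zero]
  have Λ_ne : Λ ≠ 0 := by
    rintro rfl
    exact absurd (hzero 1 rfl one_pos) (by norm_num)
  have hΛ (s : ℂ) : Λ s =
      s ^ m * Complex.exp A * genusZeroProduct (fun k => -(ρ k ^ 2)⁻¹) (s ^ 2) := by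
    simp only [hprod, genusZeroProduct, neg_mul, ← sub_eq_add_neg, div_eq_inv_mul]
  have summable : Summable fun k => ‖-(ρ k ^ 2)⁻¹‖ := by
    refine summable_norm_of_eq_mul_genusZeroProduct hent (by fun_prop) hΛ Λ_ne fun h => ?_
    obtain ⟨k⟩ : Nonempty ι := inferInstance
    exact mul_ne_zero (pow_ne_zero m (hρ k)) (Complex.exp_ne_zero A)
      ((congrFun h (ρ k)).symm.trans (Λ_root rfl))
  have zeros_infinite : {s | Λ s = 0}.Infinite :=
    (infinite_range_of_summable_inv_sq hρ summable).mono
      (Set.range_subset_iff.2 fun _ => Λ_root rfl)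
  have re_nonneg (k : ι) : 0 ≤ (-(ρ k ^ 2)⁻¹).re :=
    re_neg_inv_sq_nonneg (abs_re_le_abs_im_of_zero hzero (Λ_root rfl) (Λ_root (neg_sq _)))
  have nonneg : HasNonnegDerivsAt Λ 0 := hasNonnegDerivsAt_of_eq_genusZeroProduct summable
    re_nonneg (im_eq_zero_of_forall_gt hent hreal) hΛ
  exact ⟨nonneg, fun k σ hσ => (nonneg.iteratedDeriv k).pos_of_ne_zero
    (hent.contDiff.differentiable_iteratedDeriv k (WithTop.coe_lt_top _))
    (iteratedDeriv_ne_zero_of_infinite_zeros hent Λ_ne zeros_infinite k) (by simpa using hσ)⟩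

theorem superpositivity_from_zero_free_region
    (Λ : ℂ → ℂ) (m : ℕ) (A : ℝ) (ρ : ℕ → ℂ)
    (hent : Differentiable ℂ Λ)
    (horder : ∀ ε : ℝ, 0 < ε → ∃ C : ℝ, ∀ s : ℂ,
      ‖Λ s‖ ≤ C * Real.exp (‖s‖ ^ (1 + ε)))
    (hsym : (∀ s, Λ (-s) = Λ s) ∨ (∀ s, Λ (-s) = -Λ s))
    (hpos : ∀ σ : ℝ, 1/2 < σ → 0 < (Λ σ).re ∧ (Λ σ).im = 0)
    (hρ : ∀ k, ρ k ≠ 0)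
    (hprod : ∀ s : ℂ, Λ s = s ^ m * Complex.exp (A : ℂ) *
      ∏' k : ℕ, (1 - s ^ 2 / (ρ k) ^ 2))
    (hzero : ∀ s : ℂ, Λ s = 0 → 0 < s.re → s.re < |s.im|) :
    (∀ k : ℕ, 0 ≤ (iteratedDeriv k Λ 0).re ∧ (iteratedDeriv k Λ 0).im = 0) ∧
    (∀ k : ℕ, ∀ σ : ℝ, 1/2 < σ →
      0 < (iteratedDeriv k Λ σ).re ∧ (iteratedDeriv k Λ σ).im = 0) := by
  obtain ⟨nonneg, pos⟩ := superpositivity_from_zero_free_region_general Λ m A ρ (1 / 2) hent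
    (fun σ hσ => (hpos σ hσ).2) hρ hprod fun s hs hre => (hzero s hs hre).le
  exact ⟨fun k => (Complex.nonneg_iff.1 (nonneg k)).imp_right Eq.symm, fun k σ hσ =>
    (Complex.pos_iff.1 (pos k σ (one_half_pos.trans hσ))).imp_right Eq.symm⟩
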